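/- Let A = [[a,b],[b,c]] be an integer doubly nonnegative matrix with a ≥ b, c ≥ b, b ≥ 7, a - b ≥ 7, c - b ≥ 7, and a - b not congruent to 7 mod 8. If b, a - b, c - b are all of the form 4^r(8k+7), then A has integer cp-rank at most 10. -/

import Mathlib

open Matrix

/-!
The matrix splits as
`diag (a-b-3, c-b+2) + (b-6) • [[1,1],[1,1]] + (3,2)ᵀ (3,2)`.
A number `4 ^ r * (8 * k + 7)` is `7`, `4` or `0` mod `8`, and `7` is excluded for `a-b`. It follows
that each of `a-b-3`, `c-b+2`, `b-6` is congruent to `1` or `2` mod `4`. Each is therefore a sum of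
three squares (`sum_three_squares`), which gives `3 + 3 + 3 + 1` columns.

The three-square theorem for these residues is proved by Dirichlet's method. Given `n`, Dirichlet's
theorem on primes in arithmetic progressions supplies `d > 0` such that `d * n - 1` is a prime or
twice a prime, and quadratic reciprocity shows that `-d` is a square modulo `d * n - 1`
(`exists_sq_add_dvd`). From this one writes down a positive definite integral ternary form of
determinant `1` representing `n` (`sum_three_squares_of_dvd`), and every form of this kind takes
only sums of three squares as values (`ternary_sum_three_squares`, by Gauss's reduction).
-/

/-- Rounding to the nearest integer: any `r` can be shifted by a multiple of `a` into
`[-a/2, a/2]`. -/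
lemma exists_shift (a r : ℤ) (ha : 0 < a) :
    ∃ k : ℤ, -a ≤ 2 * (r + k * a) ∧ 2 * (r + k * a) ≤ a := by
  refine ⟨-((2 * r + a) / (2 * a)), ?_⟩
  have h1 := Int.emod_add_mul_ediv (2 * r + a) (2 * a)
  have h2 := Int.emod_nonneg (2 * r + a) (show 2 * a ≠ 0 by omega)
  have h3 := Int.emod_lt_of_pos (2 * r + a) (show 0 < 2 * a by omega)
  constructor <;> nlinarith

/-- The value at `(x, y, z)` of the ternary form with Gram matrix
`[[a, r, s], [r, b, t], [s, t, c]]`. -/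
def ternary (a b c r s t x y z : ℤ) : ℤ :=
  a * x ^ 2 + b * y ^ 2 + c * z ^ 2 + 2 * r * x * y + 2 * s * x * z + 2 * t * y * z

/-- A positive definite integral ternary form of determinant `1` takes only sums of three squares
as values. Descent on `a + A`, where `A = a * b - r ^ 2` is the leading `2 × 2` minor: a change of
the first two basis vectors lowers `a` and keeps `A`, or a change of the last two lowers `A` and
keeps `a`, unless `3 * a ^ 2 ≤ 4 * A` and `3 * A ^ 2 ≤ 4 * a`; these force `a = A = 1`, where one
completes the squares. -/
lemma ternary_sum_three_squares (N : ℕ) : ∀ a b c r s t : ℤ, 0 < a → 0 < a * b - r ^ 2 →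
    a * (b * c - t ^ 2) - r * (r * c - t * s) + s * (r * t - b * s) = 1 →
    a + (a * b - r ^ 2) ≤ N →
    ∀ x y z : ℤ, ∃ u v w : ℤ, ternary a b c r s t x y z = u ^ 2 + v ^ 2 + w ^ 2 := by
  induction N with
  | zero => intro a b c r s t h1 h2 _ h4; push_cast at h4; omega
  | succ N ih =>
    intro a b c r s t ha hA hdet hN x y z
    push_cast at hN
    obtain ⟨k, hk1, hk2⟩ := exists_shift a r ha
    by_cases hlt : b + 2 * k * r + k ^ 2 * a < a
    · -- new basis `e₂ + k e₁, e₁, e₃`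
      have hA' : (b + 2 * k * r + k ^ 2 * a) * a - (r + k * a) ^ 2 = a * b - r ^ 2 := by ring
      have hpos : 0 < b + 2 * k * r + k ^ 2 * a := by
        refine pos_of_mul_pos_left (b := a) ?_ ha.le
        nlinarith [sq_nonneg (r + k * a)]
      obtain ⟨u, v, w, h⟩ := ih (b + 2 * k * r + k ^ 2 * a) a c (r + k * a) (t + k * s) s hpos
        (by rw [hA']; exact hA) (by rw [← hdet]; ring) (by rw [hA']; omega) y (x - k * y) z
      exact ⟨u, v, w, by rw [← h]; unfold ternary; ring⟩
    push Not at hlt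
    have hred : 3 * a ^ 2 ≤ 4 * (a * b - r ^ 2) := by
      have : a * b - r ^ 2 = (b + 2 * k * r + k ^ 2 * a) * a - (r + k * a) ^ 2 := by ring
      rw [this]; nlinarith
    -- Gram matrix, scaled by `a`, of the projections of `e₂, e₃` orthogonal to `e₁`
    set A := a * b - r ^ 2 with hAdef
    set E := a * t - r * s with hE
    set B := a * c - s ^ 2 with hB
    have hAB : A * B - E ^ 2 = a := by
      rw [hAdef, hE, hB]; linear_combination a * hdet
    obtain ⟨l, hl1, hl2⟩ := exists_shift A E hA
    have hABl : A * (B + 2 * l * E + l ^ 2 * A) = a + (E + l * A) ^ 2 := by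
      linear_combination hAB
    have hBl : a * (c + 2 * l * t + l ^ 2 * b) - (s + l * r) ^ 2
        = B + 2 * l * E + l ^ 2 * A := by
      rw [hAdef, hE, hB]; ring
    by_cases hlt2 : B + 2 * l * E + l ^ 2 * A < A
    · -- new basis `e₁, e₃ + l e₂, e₂`
      have hpos : 0 < B + 2 * l * E + l ^ 2 * A := by
        refine pos_of_mul_pos_right (a := A) ?_ hA.le
        rw [hABl]; positivity
      obtain ⟨u, v, w, h⟩ := ih a (c + 2 * l * t + l ^ 2 * b) b (s + l * r) r (t + l * b) ha
        (by rw [hBl]; exact hpos) (by rw [← hdet]; ring) (by rw [hBl]; omega) x z (y - l * z)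
      exact ⟨u, v, w, by rw [← h]; unfold ternary; ring⟩
    push Not at hlt2
    have hred2 : 3 * A ^ 2 ≤ 4 * a := by nlinarith
    -- `3 a² ≤ 4 A` and `3 A² ≤ 4 a` leave only `a = A = 1`
    have hA1 : A ≤ 1 := by nlinarith [sq_nonneg (a - A)]
    have ha1 : a ≤ 1 := by nlinarith [sq_nonneg (a - A)]
    have hA1 : A = 1 := by omega
    have ha1 : a = 1 := by omega
    refine ⟨x + r * y + s * z, y + (t - r * s) * z, z, ?_⟩
    unfold ternary
    rw [hA1, ha1] at hAdef
    have hb : b = r ^ 2 + 1 := by linarith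
    subst ha1 hb
    have hc : c = s ^ 2 + (t - r * s) ^ 2 + 1 := by linarith
    subst hc
    ring

/-- With `a * (d * n - 1) = x ^ 2 + d`, the form with Gram matrix
`[[a, x, 1], [x, d * n - 1, 0], [1, 0, n]]` is positive definite of determinant `1`, and it takes
the value `n` at the third basis vector. -/
lemma sum_three_squares_of_dvd (n d x : ℤ) (hd : 0 < d) (hm : 0 < d * n - 1)
    (h : d * n - 1 ∣ x ^ 2 + d) : ∃ u v w : ℤ, n = u ^ 2 + v ^ 2 + w ^ 2 := by
  obtain ⟨a, ha⟩ := h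
  have hapos : 0 < a := by
    refine pos_of_mul_pos_right (a := d * n - 1) ?_ hm.le
    rw [← ha]; positivity
  have hA : a * (d * n - 1) - x ^ 2 = d := by linarith
  obtain ⟨u, v, w, h⟩ := ternary_sum_three_squares (a + d).toNat a (d * n - 1) n x 1 0 hapos
    (by rw [hA]; exact hd) (by linear_combination n * hA)
    (by rw [hA]; omega) 0 0 1
  exact ⟨u, v, w, by rw [← h]; unfold ternary; ring⟩

lemma exists_sq_add_dvd_of_jacobiSym {p d : ℕ} (hp : p.Prime) (h : jacobiSym (-d) p = 1) :
    ∃ x : ℤ, (p : ℤ) ∣ x ^ 2 + d := by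
  have := Fact.mk hp
  obtain ⟨y, hy⟩ := ZMod.isSquare_of_jacobiSym_eq_one h
  obtain ⟨x, rfl⟩ := ZMod.intCast_surjective y
  refine ⟨x, (ZMod.intCast_zmod_eq_zero_iff_dvd _ _).1 ?_⟩
  push_cast at hy ⊢
  linear_combination -hy

/-- `-d` is a square modulo the number `d * n - 1`, for a suitable `d`. For `n ≡ 2` mod `4` that
number is taken to be a prime `p` and `d ≡ 1` mod `4`, so that
`(-d/p) = (d/p) = (p/d) = (-1/d) = 1`. For `n ≡ 1` mod `4` it is taken to be `2 * p` and
`d ≡ 3` mod `8`, so that `(-d/p) = (p/d) = (2/d) (-1/d) = 1`. -/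
lemma exists_sq_add_dvd (n : ℕ) (hn : n % 4 = 1 ∨ n % 4 = 2) :
    ∃ d x : ℤ, 0 < d ∧ 0 < d * n - 1 ∧ d * n - 1 ∣ x ^ 2 + d := by
  rcases hn with hn | hn
  · obtain ⟨k, rfl⟩ : ∃ k, n = 4 * k + 1 := ⟨n / 4, by omega⟩
    have hcop : Nat.Coprime (6 * k + 1) (4 * (4 * k + 1)) := by
      rw [← Nat.isCoprime_iff_coprime]
      push_cast
      refine IsCoprime.mul_right ?_ ⟨-2, 3, by ring⟩
      rw [show (4 : ℤ) = 2 * 2 by norm_num]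
      exact IsCoprime.mul_right ⟨1, -3 * k, by ring⟩ ⟨1, -3 * k, by ring⟩
    obtain ⟨p, hgt, hp, hmod⟩ := Nat.forall_exists_prime_gt_and_modEq (6 * k + 1) (by omega) hcop
    obtain ⟨v, hv⟩ := (Nat.modEq_iff_dvd' hgt.le).1 hmod.symm
    replace hv : p = 4 * (4 * k + 1) * v + (6 * k + 1) := by omega
    obtain ⟨d, hd⟩ : ∃ d, d = 8 * v + 3 := ⟨_, rfl⟩
    have hpd : 2 * (p : ℤ) = d * (4 * k + 1) - 1 := by rw [hv, hd]; push_cast; ring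
    have hp2 : p % 2 = 1 := by
      rw [hv, mul_assoc]; omega
    have hdodd : Odd d := by rw [hd, Nat.odd_iff]; omega
    have hpodd : Odd p := Nat.odd_iff.2 hp2
    have hJd1 : jacobiSym (-1) d = -1 := by
      rw [jacobiSym.at_neg_one hdodd, ZMod.χ₄_nat_three_mod_four (by omega)]
    have hJd2 : jacobiSym 2 d = -1 := by
      rw [jacobiSym.at_two hdodd, ZMod.χ₈_nat_eq_if_mod_eight,
        if_neg (by omega), if_neg (by omega)]
    have hJpd : jacobiSym p d = 1 := by
      have h : jacobiSym (2 * p) d = jacobiSym (-1) d :=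
        jacobiSym.mod_left' (Int.ModEq.symm (Int.modEq_iff_dvd.2 ⟨4 * k + 1, by rw [hpd]; ring⟩))
      rw [jacobiSym.mul_left, hJd1, hJd2] at h
      linarith
    have hJ : jacobiSym (-d) p = 1 := by
      rw [← neg_one_mul, jacobiSym.mul_left, jacobiSym.at_neg_one hpodd]
      rcases Nat.odd_mod_four_iff.1 hp2 with h4 | h4
      · rw [ZMod.χ₄_nat_one_mod_four h4, jacobiSym.quadratic_reciprocity_one_mod_four' hdodd h4,
          hJpd, one_mul]
      · rw [ZMod.χ₄_nat_three_mod_four h4,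
          jacobiSym.quadratic_reciprocity_three_mod_four (by omega) h4, hJpd]
        norm_num
    obtain ⟨x, hx⟩ := exists_sq_add_dvd_of_jacobiSym hp hJ
    -- one of `x`, `x + p` is odd, which makes `x ^ 2 + d` even
    obtain ⟨y, hyodd, hy⟩ : ∃ y : ℤ, y % 2 = 1 ∧ (p : ℤ) ∣ y ^ 2 + d := by
      rcases Int.emod_two_eq_zero_or_one x with h | h
      · refine ⟨x + p, by omega, ?_⟩
        rw [show (x + p) ^ 2 + (d : ℤ) = (x ^ 2 + d) + p * (2 * x + p) by ring]
        exact dvd_add hx (dvd_mul_right _ _)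
      · exact ⟨x, h, hx⟩
    have h2 : (2 : ℤ) ∣ y ^ 2 + d := by
      obtain ⟨j, rfl⟩ : ∃ j, y = 2 * j + 1 := ⟨y / 2, by omega⟩
      exact ⟨2 * j ^ 2 + 2 * j + 4 * v + 2, by rw [hd]; push_cast; ring⟩
    have hp0 := hp.pos
    refine ⟨d, y, by omega, ?_, ?_⟩ <;> push_cast <;> rw [← hpd]
    · omega
    · refine IsCoprime.mul_dvd ?_ h2 hy
      exact_mod_cast Nat.isCoprime_iff_coprime.2 (Nat.coprime_two_left.2 hpodd)
  · obtain ⟨k, rfl⟩ : ∃ k, n = 4 * k + 2 := ⟨n / 4, by omega⟩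
    have hcop : Nat.Coprime (4 * k + 1) (4 * (4 * k + 2)) := by
      rw [← Nat.isCoprime_iff_coprime]
      push_cast
      exact IsCoprime.mul_right ⟨1, -k, by ring⟩ ⟨-1, 1, by ring⟩
    obtain ⟨p, hgt, hp, hmod⟩ := Nat.forall_exists_prime_gt_and_modEq (4 * k + 1) (by omega) hcop
    obtain ⟨v, hv⟩ := (Nat.modEq_iff_dvd' hgt.le).1 hmod.symm
    replace hv : p = 4 * (4 * k + 2) * v + (4 * k + 1) := by omega
    obtain ⟨d, hd⟩ : ∃ d, d = 4 * v + 1 := ⟨_, rfl⟩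
    have hpd : (p : ℤ) = d * (4 * k + 2) - 1 := by rw [hv, hd]; push_cast; ring
    have hp4 : p % 4 = 1 := by
      rw [hv, mul_assoc]; omega
    have hdodd : Odd d := by rw [hd, Nat.odd_iff]; omega
    have hpodd : Odd p := Nat.odd_iff.2 (by omega)
    have hJpd : jacobiSym p d = 1 := by
      have h : jacobiSym p d = jacobiSym (-1) d :=
        jacobiSym.mod_left' (Int.ModEq.symm (Int.modEq_iff_dvd.2 ⟨4 * k + 2, by rw [hpd]; ring⟩))
      rw [h, jacobiSym.at_neg_one hdodd, ZMod.χ₄_nat_one_mod_four (by omega)]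
    have hJ : jacobiSym (-d) p = 1 := by
      rw [← neg_one_mul, jacobiSym.mul_left, jacobiSym.at_neg_one hpodd,
        ZMod.χ₄_nat_one_mod_four hp4, jacobiSym.quadratic_reciprocity_one_mod_four' hdodd hp4,
        hJpd, one_mul]
    obtain ⟨x, hx⟩ := exists_sq_add_dvd_of_jacobiSym hp hJ
    have hp0 := hp.pos
    refine ⟨d, x, by omega, ?_, ?_⟩ <;> push_cast <;> rw [← hpd]
    · omega
    · exact hx

/-- The part of the Gauss–Legendre three-square theorem concerning `n ≡ 1, 2` mod `4`. -/
lemma sum_three_squares (n : ℤ) (h0 : 0 ≤ n) (hn : n % 4 = 1 ∨ n % 4 = 2) :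
    ∃ u v w : ℤ, 0 ≤ u ∧ 0 ≤ v ∧ 0 ≤ w ∧ n = u ^ 2 + v ^ 2 + w ^ 2 := by
  lift n to ℕ using h0
  obtain ⟨d, x, hd, hm, h⟩ := exists_sq_add_dvd n (by omega)
  obtain ⟨u, v, w, h⟩ := sum_three_squares_of_dvd n d x hd hm h
  exact ⟨|u|, |v|, |w|, abs_nonneg _, abs_nonneg _, abs_nonneg _, by simpa only [sq_abs] using h⟩

lemma form_mod_eight {x : ℤ} (h : ∃ r k : ℕ, x = 4 ^ r * (8 * k + 7)) :
    x % 8 = 7 ∨ x % 8 = 4 ∨ x % 8 = 0 := by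
  obtain ⟨r, k, rfl⟩ := h
  rcases r with _ | _ | r
  · omega
  · omega
  · rw [show (4 : ℤ) ^ (r + 1 + 1) * (8 * k + 7) = 8 * (2 * (4 ^ r * (8 * k + 7))) by ring]
    omega

theorem cp_rank_le_ten_case1 (a b c : ℤ)
    (hab : b ≤ a) (hcb : b ≤ c) (hb7 : 7 ≤ b) (hab7 : 7 ≤ a - b) (hcb7 : 7 ≤ c - b)
    (hdet : b ^ 2 ≤ a * c)
    (hmod : (a - b) % 8 ≠ 7)
    (hbform : ∃ r k : ℕ, b = 4 ^ r * (8 * k + 7))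
    (habform : ∃ r k : ℕ, a - b = 4 ^ r * (8 * k + 7))
    (hcbform : ∃ r k : ℕ, c - b = 4 ^ r * (8 * k + 7)) :
    ∃ (m : ℕ), m ≤ 10 ∧ ∃ V : Matrix (Fin 2) (Fin m) ℤ,
      (∀ i j, 0 ≤ V i j) ∧ !![a, b; b, c] = V * Vᵀ := by
  have hb := form_mod_eight hbform
  have ha := form_mod_eight habform
  have hc := form_mod_eight hcbform
  obtain ⟨u₁, u₂, u₃, hu₁, hu₂, hu₃, hu⟩ :=
    sum_three_squares (a - b - 3) (by omega) (by omega)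
  obtain ⟨v₁, v₂, v₃, hv₁, hv₂, hv₃, hv⟩ :=
    sum_three_squares (c - b + 2) (by omega) (by omega)
  obtain ⟨w₁, w₂, w₃, hw₁, hw₂, hw₃, hw⟩ :=
    sum_three_squares (b - 6) (by omega) (by omega)
  refine ⟨10, le_rfl, !![u₁, u₂, u₃, 0, 0, 0, w₁, w₂, w₃, 3;
    0, 0, 0, v₁, v₂, v₃, w₁, w₂, w₃, 2], ?_, ?_⟩
  · intro i j
    fin_cases i <;> fin_cases j <;> simp <;> assumption
  · ext i j
    fin_cases i <;> fin_cases j <;>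
      simp [Matrix.mul_apply, Fin.sum_univ_succ] <;> linarith
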